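/- Let (a,B_a) be a NIS-Lie superalgebra over a field K of characteristic 2 with B_a odd, and let D be an even derivation of a satisfying B_a(D(u),v) + B_a(u,D(v)) = 0 for all u,v ∈ a. Then on g := Kx ⊕ a ⊕ Ke with x odd and e even, the squaring s_g(u + μx) := s_a(u) for u + μx ∈ g_1, together with the bracket [x,g]_g := 0, [u,v]_g := B_a(D(u),v)x + [u,v]_a for u,v ∈ a, and [u,e]_g := D(u), defines a Lie superalgebra structure on g; moreover the bilinear form B_g determined by B_g|_{a×a} = B_a, B_g(a,x) = B_g(a,e) = 0, B_g(x,e) = 1, B_g(x,x) = B_g(e,e) = 0 is odd, non-degenerate, symmetric and invariant, so that (g,B_g) is a NIS-Lie superalgebra (the D_ev-extension of (a,B_a) by means of D). -/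

import Mathlib

/-!
Common definitions: Lie superalgebras in characteristic 2 (encoded by their even
part `g0`, odd part `g1`, bracket components and squaring), NIS forms (even and odd),
homogeneous derivations, isometries, ideals, irreducibility, and the structure
formulas of the various double extensions.
-/

namespace Char2DoubleExt

section Defs

variable (K : Type) [Field K]
variable (g0 g1 h0 h1 : Type)
variable [AddCommGroup g0] [Module K g0] [AddCommGroup g1] [Module K g1]
variable [AddCommGroup h0] [Module K h0] [AddCommGroup h1] [Module K h1]

/-- A Lie superalgebra over a field of characteristic 2: `g0` is the even part,
`g1` the odd part, `br0` the bracket on `g0`, `br1` the action of `g0` on `g1`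
(the mixed bracket, extended symmetrically), `br11` the bracket of two odd
elements, and `sq` the squaring, whose polarization is `br11`. -/
structure SuperAlg : Type where
  br0 : g0 →ₗ[K] g0 →ₗ[K] g0
  br1 : g0 →ₗ[K] g1 →ₗ[K] g1
  br11 : g1 →ₗ[K] g1 →ₗ[K] g0
  sq : g1 → g0
  sq_smul : ∀ (c : K) (f : g1), sq (c • f) = (c * c) • sq f
  sq_add : ∀ f g : g1, sq (f + g) = sq f + sq g + br11 f g
  br0_self : ∀ x : g0, br0 x x = 0
  br11_comm : ∀ f g : g1, br11 f g = br11 g f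
  jacobi0 : ∀ x y z : g0, br0 x (br0 y z) + br0 y (br0 z x) + br0 z (br0 x y) = 0
  act_br : ∀ (x y : g0) (f : g1), br1 (br0 x y) f = br1 x (br1 y f) + br1 y (br1 x f)
  jacobi_mix : ∀ (x : g0) (f g : g1),
    br0 x (br11 f g) + br11 f (br1 x g) + br11 g (br1 x f) = 0
  sq_br0 : ∀ (f : g1) (x : g0), br0 (sq f) x = br11 f (br1 x f)
  sq_br1 : ∀ f g : g1, br1 (sq f) g = br1 (br11 f g) f

/-- A non-degenerate invariant supersymmetric *even* bilinear form on a Lie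
superalgebra in characteristic 2: it pairs `g0` with `g0` (component `B0`) and
`g1` with `g1` (component `B1`); mixed pairings vanish by evenness. -/
structure EvenNIS (S : SuperAlg K g0 g1) : Type where
  B0 : g0 →ₗ[K] g0 →ₗ[K] K
  B1 : g1 →ₗ[K] g1 →ₗ[K] K
  symm0 : ∀ x y, B0 x y = B0 y x
  symm1 : ∀ f g, B1 f g = B1 g f
  alt1 : ∀ f, B1 f f = 0
  nondeg0 : ∀ x, (∀ y, B0 x y = 0) → x = 0
  nondeg1 : ∀ f, (∀ g, B1 f g = 0) → f = 0
  inv0 : ∀ x y z, B0 (S.br0 x y) z = B0 x (S.br0 y z)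
  inv1 : ∀ (x : g0) (f g : g1), B1 (S.br1 x f) g = B0 x (S.br11 f g)
  inv2 : ∀ (f g : g1) (x : g0), B0 (S.br11 f g) x = B1 f (S.br1 x g)

/-- A non-degenerate invariant supersymmetric *odd* bilinear form: it pairs `g0`
with `g1` (component `Bo`); like-parity pairings vanish by oddness, and
`B(f,f) = 0` for odd `f` is automatic. -/
structure OddNIS (S : SuperAlg K g0 g1) : Type where
  Bo : g0 →ₗ[K] g1 →ₗ[K] K
  nondeg0 : ∀ x, (∀ f, Bo x f = 0) → x = 0
  nondeg1 : ∀ f, (∀ x, Bo x f = 0) → f = 0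
  inv0 : ∀ (x y : g0) (f : g1), Bo (S.br0 x y) f = Bo x (S.br1 y f)
  inv1 : ∀ (x y : g0) (f : g1), Bo y (S.br1 x f) = Bo x (S.br1 y f)
  inv2 : ∀ f g h : g1, Bo (S.br11 f g) h = Bo (S.br11 g h) f

/-- An even derivation of a Lie superalgebra in characteristic 2. -/
structure EvenDer (S : SuperAlg K g0 g1) : Type where
  D0 : g0 →ₗ[K] g0
  D1 : g1 →ₗ[K] g1
  der0 : ∀ x y, D0 (S.br0 x y) = S.br0 (D0 x) y + S.br0 x (D0 y)
  der1 : ∀ x f, D1 (S.br1 x f) = S.br1 (D0 x) f + S.br1 x (D1 f)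
  der_sq : ∀ f, D0 (S.sq f) = S.br11 (D1 f) f

/-- An odd derivation of a Lie superalgebra in characteristic 2. -/
structure OddDer (S : SuperAlg K g0 g1) : Type where
  D0 : g0 →ₗ[K] g1
  D1 : g1 →ₗ[K] g0
  der0 : ∀ x y, D0 (S.br0 x y) = S.br1 x (D0 y) + S.br1 y (D0 x)
  der1 : ∀ x f, D1 (S.br1 x f) = S.br11 (D0 x) f + S.br0 x (D1 f)
  der_sq : ∀ f, D0 (S.sq f) = S.br1 (D1 f) f

/-- An isometry between Lie superalgebras endowed with even NIS forms: an even
linear bijection preserving brackets, squarings and the bilinear forms. -/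
structure EvenIsometry (S : SuperAlg K g0 g1) (N : EvenNIS K g0 g1 S)
    (S' : SuperAlg K h0 h1) (N' : EvenNIS K h0 h1 S') : Type where
  e0 : g0 ≃ₗ[K] h0
  e1 : g1 ≃ₗ[K] h1
  map_br0 : ∀ x y, e0 (S.br0 x y) = S'.br0 (e0 x) (e0 y)
  map_br1 : ∀ x f, e1 (S.br1 x f) = S'.br1 (e0 x) (e1 f)
  map_br11 : ∀ f g, e0 (S.br11 f g) = S'.br11 (e1 f) (e1 g)
  map_sq : ∀ f, e0 (S.sq f) = S'.sq (e1 f)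
  map_B0 : ∀ x y, N'.B0 (e0 x) (e0 y) = N.B0 x y
  map_B1 : ∀ f g, N'.B1 (e1 f) (e1 g) = N.B1 f g

/-- An isometry between Lie superalgebras endowed with odd NIS forms. -/
structure OddIsometry (S : SuperAlg K g0 g1) (N : OddNIS K g0 g1 S)
    (S' : SuperAlg K h0 h1) (N' : OddNIS K h0 h1 S') : Type where
  e0 : g0 ≃ₗ[K] h0
  e1 : g1 ≃ₗ[K] h1
  map_br0 : ∀ x y, e0 (S.br0 x y) = S'.br0 (e0 x) (e0 y)
  map_br1 : ∀ x f, e1 (S.br1 x f) = S'.br1 (e0 x) (e1 f)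
  map_br11 : ∀ f g, e0 (S.br11 f g) = S'.br11 (e1 f) (e1 g)
  map_sq : ∀ f, e0 (S.sq f) = S'.sq (e1 f)
  map_Bo : ∀ x f, N'.Bo (e0 x) (e1 f) = N.Bo x f

/-- A (graded) ideal of a Lie superalgebra in characteristic 2, given by its
even part `I0` and odd part `I1`. -/
def IsIdealPair (S : SuperAlg K g0 g1) (I0 : Submodule K g0) (I1 : Submodule K g1) : Prop :=
  (∀ x ∈ I0, ∀ y, S.br0 x y ∈ I0) ∧ (∀ x ∈ I0, ∀ f, S.br1 x f ∈ I1) ∧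
  (∀ f ∈ I1, ∀ x : g0, S.br1 x f ∈ I1) ∧ (∀ f ∈ I1, ∀ g, S.br11 f g ∈ I0) ∧
  (∀ f ∈ I1, S.sq f ∈ I0)

/-- Irreducibility of a NIS-Lie superalgebra with an even form: it is not the
direct sum of two nonzero mutually orthogonal ideals. -/
def EvenIrreducible (S : SuperAlg K g0 g1) (N : EvenNIS K g0 g1 S) : Prop :=
  ¬ ∃ (I0 J0 : Submodule K g0) (I1 J1 : Submodule K g1),
      IsIdealPair K g0 g1 S I0 I1 ∧ IsIdealPair K g0 g1 S J0 J1 ∧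
      (I0 ≠ ⊥ ∨ I1 ≠ ⊥) ∧ (J0 ≠ ⊥ ∨ J1 ≠ ⊥) ∧
      I0 ⊓ J0 = ⊥ ∧ I0 ⊔ J0 = ⊤ ∧ I1 ⊓ J1 = ⊥ ∧ I1 ⊔ J1 = ⊤ ∧
      (∀ x ∈ I0, ∀ y ∈ J0, N.B0 x y = 0) ∧ (∀ f ∈ I1, ∀ g ∈ J1, N.B1 f g = 0)

/-- Irreducibility of a NIS-Lie superalgebra with an odd form. -/
def OddIrreducible (S : SuperAlg K g0 g1) (N : OddNIS K g0 g1 S) : Prop :=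
  ¬ ∃ (I0 J0 : Submodule K g0) (I1 J1 : Submodule K g1),
      IsIdealPair K g0 g1 S I0 I1 ∧ IsIdealPair K g0 g1 S J0 J1 ∧
      (I0 ≠ ⊥ ∨ I1 ≠ ⊥) ∧ (J0 ≠ ⊥ ∨ J1 ≠ ⊥) ∧
      I0 ⊓ J0 = ⊥ ∧ I0 ⊔ J0 = ⊤ ∧ I1 ⊓ J1 = ⊥ ∧ I1 ⊔ J1 = ⊤ ∧
      (∀ x ∈ I0, ∀ g ∈ J1, N.Bo x g = 0) ∧ (∀ y ∈ J0, ∀ f ∈ I1, N.Bo y f = 0)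

/-- An ideal of a Lie superalgebra given as a pair of subsets (closed under the
vector space operations, brackets with arbitrary elements, and the squaring). -/
def IsIdealSet (S : SuperAlg K g0 g1) (I0 : Set g0) (I1 : Set g1) : Prop :=
  ((0 : g0) ∈ I0) ∧ (∀ x y, x ∈ I0 → y ∈ I0 → x + y ∈ I0) ∧
  (∀ (c : K) x, x ∈ I0 → c • x ∈ I0) ∧
  ((0 : g1) ∈ I1) ∧ (∀ f g, f ∈ I1 → g ∈ I1 → f + g ∈ I1) ∧
  (∀ (c : K) f, f ∈ I1 → c • f ∈ I1) ∧
  (∀ x ∈ I0, ∀ y, S.br0 x y ∈ I0) ∧ (∀ x ∈ I0, ∀ f, S.br1 x f ∈ I1) ∧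
  (∀ f ∈ I1, ∀ x : g0, S.br1 x f ∈ I1) ∧ (∀ f ∈ I1, ∀ g, S.br11 f g ∈ I0) ∧
  (∀ f ∈ I1, S.sq f ∈ I0)

/-- The even part of the center of a Lie superalgebra. -/
def zEven (S : SuperAlg K g0 g1) : Submodule K g0 :=
  (⨅ y : g0, LinearMap.ker (S.br0.flip y)) ⊓ (⨅ f : g1, LinearMap.ker (S.br1.flip f))

/-- The odd part of the center of a Lie superalgebra. -/
def zOdd (S : SuperAlg K g0 g1) : Submodule K g1 :=
  (⨅ x : g0, LinearMap.ker (S.br1 x)) ⊓ (⨅ g : g1, LinearMap.ker (S.br11.flip g))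

/-- The compatibility conditions between an even NIS `N`, an even derivation `D`
and a quadratic form `al` on the odd part, entering the `D_ev`-extension (even
form case): `B(Du,v)+B(u,Dv)=0`, `B(Du,u)=0` for even `u`, `al` is quadratic and
its polar form is `B(·,D·)`. -/
def DevDataEven (S : SuperAlg K g0 g1) (N : EvenNIS K g0 g1 S)
    (D : EvenDer K g0 g1 S) (al : g1 → K) : Prop :=
  (∀ x y : g0, N.B0 (D.D0 x) y + N.B0 x (D.D0 y) = 0) ∧
  (∀ f g : g1, N.B1 (D.D1 f) g + N.B1 f (D.D1 g) = 0) ∧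
  (∀ x : g0, N.B0 (D.D0 x) x = 0) ∧
  (∀ (c : K) (f : g1), al (c • f) = c * c * al f) ∧
  (∀ f g : g1, N.B1 f (D.D1 g) = al (f + g) - al f - al g)

/-- The structure constants of the `D_ev`-extension `g = Kx ⊕ a ⊕ Kx*` (even
form, even `x`, `x*`); an element of the even part is written `(r, u, s)` for
`r x + u + s x*`, and the constant `c` is the (arbitrary) value `B_g(x*,x*)`. -/
def DevExtEvenFormulas (S : SuperAlg K g0 g1) (N : EvenNIS K g0 g1 S)
    (D : EvenDer K g0 g1 S) (al : g1 → K) (c : K)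
    (T : SuperAlg K (K × g0 × K) g1) (M : EvenNIS K (K × g0 × K) g1 T) : Prop :=
  (∀ (r s r' s' : K) (u u' : g0),
      T.br0 (r, u, s) (r', u', s')
        = (N.B0 (D.D0 u) u', S.br0 u u' + s • D.D0 u' + s' • D.D0 u, 0)) ∧
  (∀ (r s : K) (u : g0) (f : g1), T.br1 (r, u, s) f = S.br1 u f + s • D.D1 f) ∧
  (∀ f : g1, T.sq f = (al f, S.sq f, 0)) ∧
  (∀ (r s r' s' : K) (u u' : g0),
      M.B0 (r, u, s) (r', u', s') = N.B0 u u' + r * s' + r' * s + c * (s * s')) ∧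
  (∀ f g : g1, M.B1 f g = N.B1 f g)

/-- The compatibility conditions between an even NIS `N`, an odd derivation `D`
and an even element `w = a₀`, entering the `D_od`-extension (even form case):
`B(Du,v) = B(u,Dv)`, `D² = ad_w`, `D(w) = 0`. -/
def DodDataEven (S : SuperAlg K g0 g1) (N : EvenNIS K g0 g1 S)
    (D : OddDer K g0 g1 S) (w : g0) : Prop :=
  (∀ (x : g0) (f : g1), N.B1 (D.D0 x) f = N.B0 x (D.D1 f)) ∧
  (∀ x : g0, D.D1 (D.D0 x) = S.br0 w x) ∧
  (∀ f : g1, D.D0 (D.D1 f) = S.br1 w f) ∧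
  D.D0 w = 0

/-- The structure constants of the `D_od`-extension `g = Kx ⊕ a ⊕ Kx*` (even
form, odd `x`, `x*`); an element of the odd part is written `(r, u, t)` for
`r x + u + t x*`. -/
def DodExtEvenFormulas (S : SuperAlg K g0 g1) (N : EvenNIS K g0 g1 S)
    (D : OddDer K g0 g1 S) (w : g0)
    (T : SuperAlg K g0 (K × g1 × K)) (M : EvenNIS K g0 (K × g1 × K) T) : Prop :=
  (∀ x y : g0, T.br0 x y = S.br0 x y) ∧
  (∀ (x : g0) (r t : K) (u : g1),
      T.br1 x (r, u, t) = (N.B1 (D.D0 x) u, S.br1 x u + t • D.D0 x, 0)) ∧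
  (∀ (r t : K) (u : g1), T.sq (r, u, t) = S.sq u + (t * t) • w + t • D.D1 u) ∧
  (∀ x y : g0, M.B0 x y = N.B0 x y) ∧
  (∀ (r t r' t' : K) (u u' : g1),
      M.B1 (r, u, t) (r', u', t') = N.B1 u u' + r * t' + r' * t)

/-- The compatibility conditions between an odd NIS `No`, an odd derivation `D`,
an even element `w = a₀` and a quadratic form `al`, entering the
`D_od`-extension (odd form case). -/
def DodDataOdd (S : SuperAlg K g0 g1) (No : OddNIS K g0 g1 S)
    (D : OddDer K g0 g1 S) (w : g0) (al : g1 → K) : Prop :=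
  (∀ x y : g0, No.Bo y (D.D0 x) + No.Bo x (D.D0 y) = 0) ∧
  (∀ f g : g1, No.Bo (D.D1 f) g + No.Bo (D.D1 g) f = 0) ∧
  (∀ x : g0, No.Bo x (D.D0 x) = 0) ∧
  (∀ x : g0, D.D1 (D.D0 x) = S.br0 w x) ∧
  (∀ f : g1, D.D0 (D.D1 f) = S.br1 w f) ∧
  D.D0 w = 0 ∧
  (∀ (c : K) (f : g1), al (c • f) = c * c * al f) ∧
  (∀ f g : g1, al (f + g) - al f - al g = No.Bo (D.D1 f) g)

/-- The structure constants of the `D_od`-extension `g = Kx ⊕ a ⊕ Ke` (odd form,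
even `x`, odd `e`); an even element is written `(r, u)` for `r x + u`, an odd
element `(v, μ)` for `v + μ e`. -/
def DodExtOddFormulas (S : SuperAlg K g0 g1) (No : OddNIS K g0 g1 S)
    (D : OddDer K g0 g1 S) (w : g0) (al : g1 → K) (m : K)
    (T : SuperAlg K (K × g0) (g1 × K)) (M : OddNIS K (K × g0) (g1 × K) T) : Prop :=
  (∀ (r r' : K) (x y : g0), T.br0 (r, x) (r', y) = (No.Bo y (D.D0 x), S.br0 x y)) ∧
  (∀ (r μ : K) (x : g0) (v : g1), T.br1 (r, x) (v, μ) = (S.br1 x v + μ • D.D0 x, 0)) ∧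
  (∀ (μ : K) (v : g1),
      T.sq (v, μ) = (μ * μ * m + al v, S.sq v + (μ * μ) • w + μ • D.D1 v)) ∧
  (∀ (r μ : K) (x : g0) (v : g1), M.Bo (r, x) (v, μ) = No.Bo x v + r * μ)

/-- The compatibility condition between an odd NIS `No` and an even derivation
`D`, entering the `D_ev`-extension (odd form case): `B(Du,v)+B(u,Dv)=0`. -/
def DevDataOdd (S : SuperAlg K g0 g1) (No : OddNIS K g0 g1 S)
    (D : EvenDer K g0 g1 S) : Prop :=
  ∀ (x : g0) (v : g1), No.Bo (D.D0 x) v + No.Bo x (D.D1 v) = 0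

/-- The structure constants of the `D_ev`-extension `g = Kx ⊕ a ⊕ Ke` (odd form,
odd `x`, even `e`); an even element is written `(u, ν)` for `u + ν e`, an odd
element `(μ, v)` for `μ x + v`. -/
def DevExtOddFormulas (S : SuperAlg K g0 g1) (No : OddNIS K g0 g1 S)
    (D : EvenDer K g0 g1 S)
    (T : SuperAlg K (g0 × K) (K × g1)) (M : OddNIS K (g0 × K) (K × g1) T) : Prop :=
  (∀ (ν ν' : K) (x y : g0),
      T.br0 (x, ν) (y, ν') = (S.br0 x y + ν • D.D0 y + ν' • D.D0 x, 0)) ∧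
  (∀ (ν μ : K) (x : g0) (v : g1),
      T.br1 (x, ν) (μ, v) = (No.Bo (D.D0 x) v, S.br1 x v + ν • D.D1 v)) ∧
  (∀ (μ : K) (v : g1), T.sq (μ, v) = (S.sq v, 0)) ∧
  (∀ (ν μ : K) (x : g0) (v : g1), M.Bo (x, ν) (μ, v) = No.Bo x v + ν * μ)

end Defs

end Char2DoubleExt

namespace Char2DoubleExt

theorem SuperAlg.br0_comm {K g0 g1 : Type} [Field K] [CharP K 2]
    [AddCommGroup g0] [Module K g0] [AddCommGroup g1] [Module K g1]
    (S : SuperAlg K g0 g1) (x y : g0) : S.br0 x y = S.br0 y x := by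
  have h := S.br0_self (x + y)
  have h2 : (2 : K) = 0 := CharTwo.two_eq_zero
  simp only [map_add, LinearMap.add_apply, S.br0_self] at h
  linear_combination (norm := module) h - h2 • S.br0 y x

theorem SuperAlg.sq_zero {K g0 g1 : Type} [Field K]
    [AddCommGroup g0] [Module K g0] [AddCommGroup g1] [Module K g1]
    (S : SuperAlg K g0 g1) : S.sq 0 = 0 := by
  simpa using S.sq_smul 0 0

theorem SuperAlg.br11_self {K g0 g1 : Type} [Field K] [CharP K 2]
    [AddCommGroup g0] [Module K g0] [AddCommGroup g1] [Module K g1]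
    (S : SuperAlg K g0 g1) (f : g1) : S.br11 f f = 0 := by
  have h2 : (2 : K) = 0 := CharTwo.two_eq_zero
  have h := S.sq_add f f
  rw [← two_smul K f, h2, zero_smul, S.sq_zero] at h
  linear_combination (norm := module) -h - h2 • S.sq f

theorem EvenDer.der11 {K g0 g1 : Type} [Field K]
    [AddCommGroup g0] [Module K g0] [AddCommGroup g1] [Module K g1]
    {S : SuperAlg K g0 g1} (D : EvenDer K g0 g1 S) (f g : g1) :
    D.D0 (S.br11 f g) = S.br11 (D.D1 f) g + S.br11 f (D.D1 g) := by
  have h := D.der_sq (f + g)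
  simp only [S.sq_add, map_add, LinearMap.add_apply, D.der_sq, S.br11_comm (D.D1 g) f] at h
  linear_combination (norm := module) h

section Extension

variable {K a0 a1 : Type} [Field K]
  [AddCommGroup a0] [Module K a0] [AddCommGroup a1] [Module K a1]
  {S : SuperAlg K a0 a1}

/-- The bracket of even elements in the `D_ev`-extension. -/
def devBr0 (D : EvenDer K a0 a1 S) : a0 × K →ₗ[K] a0 × K →ₗ[K] a0 × K :=
  LinearMap.mk₂ K (fun p q => (S.br0 p.1 q.1 + p.2 • D.D0 q.1 + q.2 • D.D0 p.1, 0))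
    (fun _ _ _ => by ext <;> simp; module) (fun _ _ _ => by ext <;> simp; module)
    (fun _ _ _ => by ext <;> simp; module) (fun _ _ _ => by ext <;> simp; module)

/-- The bracket of an even and an odd element in the `D_ev`-extension. -/
def devBr1 (No : OddNIS K a0 a1 S) (D : EvenDer K a0 a1 S) :
    a0 × K →ₗ[K] K × a1 →ₗ[K] K × a1 :=
  LinearMap.mk₂ K (fun p q => (No.Bo (D.D0 p.1) q.2, S.br1 p.1 q.2 + p.2 • D.D1 q.2))
    (fun _ _ _ => by ext <;> simp; module) (fun _ _ _ => by ext <;> simp; module)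
    (fun _ _ _ => by ext <;> simp; module) (fun _ _ _ => by ext <;> simp; module)

/-- The bracket of odd elements in the `D_ev`-extension. -/
def devBr11 (S : SuperAlg K a0 a1) : K × a1 →ₗ[K] K × a1 →ₗ[K] a0 × K :=
  LinearMap.mk₂ K (fun p q => (S.br11 p.2 q.2, 0))
    (fun _ _ _ => by ext <;> simp) (fun _ _ _ => by ext <;> simp)
    (fun _ _ _ => by ext <;> simp) (fun _ _ _ => by ext <;> simp)

/-- The odd bilinear form on the `D_ev`-extension. -/
def devForm (No : OddNIS K a0 a1 S) : a0 × K →ₗ[K] K × a1 →ₗ[K] K :=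
  LinearMap.mk₂ K (fun p q => No.Bo p.1 q.2 + p.2 * q.1)
    (fun _ _ _ => by simp; ring) (fun _ _ _ => by simp; ring)
    (fun _ _ _ => by simp; ring) (fun _ _ _ => by simp; ring)

theorem DevDataOdd.form_comm [CharP K 2] {No : OddNIS K a0 a1 S} {D : EvenDer K a0 a1 S}
    (h : DevDataOdd K a0 a1 S No D) (x : a0) (f : a1) :
    No.Bo (D.D0 x) f = No.Bo x (D.D1 f) :=
  CharTwo.add_eq_zero.mp (h x f)

/-- The `D_ev`-extension of a Lie superalgebra with an odd NIS form. -/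
def devExt [CharP K 2] (No : OddNIS K a0 a1 S) (D : EvenDer K a0 a1 S)
    (h : DevDataOdd K a0 a1 S No D) : SuperAlg K (a0 × K) (K × a1) where
  br0 := devBr0 D
  br1 := devBr1 No D
  br11 := devBr11 S
  sq p := (S.sq p.2, 0)
  sq_smul c f := by simp [S.sq_smul]
  sq_add f g := by simp [S.sq_add, devBr11]
  br0_self := by
    rintro ⟨x, r⟩
    have h2 : (2 : K) = 0 := CharTwo.two_eq_zero
    simp only [devBr0, LinearMap.mk₂_apply, S.br0_self, Prod.mk_eq_zero, and_true]
    linear_combination (norm := module) (r * h2) • D.D0 x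
  br11_comm f g := by simp [devBr11, S.br11_comm f.2 g.2]
  jacobi0 := by
    rintro ⟨x, r⟩ ⟨y, s⟩ ⟨z, t⟩
    have h2 : (2 : K) = 0 := CharTwo.two_eq_zero
    simp only [devBr0, LinearMap.mk₂_apply, map_add, map_smul, D.der0, Prod.mk_add_mk,
      Prod.mk_eq_zero, zero_smul, add_zero, and_true]
    rw [S.br0_comm (D.D0 y) z, S.br0_comm (D.D0 z) x, S.br0_comm (D.D0 x) y]
    linear_combination (norm := module) S.jacobi0 x y z
      + (r * h2) • S.br0 y (D.D0 z) + (r * h2) • S.br0 z (D.D0 y)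
      + (s * h2) • S.br0 x (D.D0 z) + (s * h2) • S.br0 z (D.D0 x)
      + (t * h2) • S.br0 x (D.D0 y) + (t * h2) • S.br0 y (D.D0 x)
      + (r * s * h2) • D.D0 (D.D0 z) + (s * t * h2) • D.D0 (D.D0 x)
      + (r * t * h2) • D.D0 (D.D0 y)
  act_br := by
    rintro ⟨x, r⟩ ⟨y, s⟩ ⟨m, f⟩
    have h2 : (2 : K) = 0 := CharTwo.two_eq_zero
    ext
    · simp only [devBr0, devBr1, LinearMap.mk₂_apply, map_add, map_smul, D.der0,
        LinearMap.add_apply, LinearMap.smul_apply, Prod.fst_add, smul_eq_mul,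
        No.inv0, No.inv1 (D.D0 y) x, h.form_comm (D.D0 _)]
      ring
    · simp only [devBr0, devBr1, LinearMap.mk₂_apply, map_add, map_smul, D.der1, S.act_br,
        LinearMap.add_apply, LinearMap.smul_apply, Prod.snd_add, zero_smul]
      linear_combination (norm := module) - (r * h2) • S.br1 y (D.D1 f)
        - (s * h2) • S.br1 x (D.D1 f) - (r * s * h2) • D.D1 (D.D1 f)
  jacobi_mix := by
    rintro ⟨x, r⟩ ⟨m, f⟩ ⟨n, g⟩
    have h2 : (2 : K) = 0 := CharTwo.two_eq_zero
    simp only [devBr0, devBr1, devBr11, LinearMap.mk₂_apply, map_add, map_smul, D.der11,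
      Prod.mk_add_mk, Prod.mk_eq_zero, zero_smul, add_zero, and_true,
      S.br11_comm (D.D1 f) g]
    linear_combination (norm := module) S.jacobi_mix x f g
      + (r * h2) • S.br11 g (D.D1 f) + (r * h2) • S.br11 f (D.D1 g)
  sq_br0 := by
    rintro ⟨m, f⟩ ⟨x, r⟩
    simp [devBr0, devBr1, devBr11, S.sq_br0, D.der_sq, S.br11_comm (D.D1 f) f]
  sq_br1 := by
    rintro ⟨m, f⟩ ⟨n, g⟩
    ext
    · simp only [devBr1, devBr11, LinearMap.mk₂_apply, D.der_sq, D.der11, map_add,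
        LinearMap.add_apply]
      rw [S.br11_comm f (D.D1 g), No.inv2 (D.D1 g) f f, S.br11_self,
        No.inv2 (D.D1 f) f g, No.inv2 (D.D1 f) g f, S.br11_comm g f]
      simp
    · simp [devBr1, devBr11, S.sq_br1]

/-- The odd NIS form on the `D_ev`-extension. -/
def devNIS [CharP K 2] (No : OddNIS K a0 a1 S) (D : EvenDer K a0 a1 S)
    (h : DevDataOdd K a0 a1 S No D) : OddNIS K (a0 × K) (K × a1) (devExt No D h) where
  Bo := devForm No
  nondeg0 := by
    rintro ⟨x, r⟩ hx
    have hr := hx (1, 0)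
    have hx0 := No.nondeg0 x fun f => by simpa [devForm] using hx (0, f)
    simp_all [devForm]
  nondeg1 := by
    rintro ⟨m, f⟩ hf
    have hm := hf (0, 1)
    have hf0 := No.nondeg1 f fun x => by simpa [devForm] using hf (x, 0)
    simp_all [devForm]
  inv0 := by
    rintro ⟨x, r⟩ ⟨y, s⟩ ⟨m, f⟩
    simp only [devExt, devBr0, devBr1, devForm, LinearMap.mk₂_apply, map_add, map_smul,
      LinearMap.add_apply, LinearMap.smul_apply, smul_eq_mul, No.inv0, h.form_comm]
    ring
  inv1 := by
    rintro ⟨x, r⟩ ⟨y, s⟩ ⟨m, f⟩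
    simp only [devExt, devBr1, devForm, LinearMap.mk₂_apply, map_add, map_smul,
      smul_eq_mul, No.inv1 x y, h.form_comm]
    ring
  inv2 f g k := by simp [devExt, devBr11, devForm, No.inv2 f.2 g.2 k.2]

end Extension

/-- Theorem 4.4 of the paper: the `D_ev`-extension of a
NIS-Lie superalgebra `(a, B_a)` in characteristic 2 with `B_a` odd, by means of
an even derivation `D` with `B_a(Du,v) + B_a(u,Dv) = 0`, is again a NIS-Lie
superalgebra with an odd form: there is a Lie superalgebra structure on
`g = Kx ⊕ a ⊕ Ke` (`x` odd, `e` even) with the prescribed squaring, bracket and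
odd bilinear form. -/
theorem stmt12 (K : Type) [Field K] [CharP K 2] (a0 a1 : Type)
    [AddCommGroup a0] [Module K a0] [AddCommGroup a1] [Module K a1]
    [FiniteDimensional K a0] [FiniteDimensional K a1]
    (S : SuperAlg K a0 a1) (No : OddNIS K a0 a1 S)
    (D : EvenDer K a0 a1 S)
    (hdata : DevDataOdd K a0 a1 S No D) :
    ∃ (T : SuperAlg K (a0 × K) (K × a1)) (M : OddNIS K (a0 × K) (K × a1) T),
      DevExtOddFormulas K a0 a1 S No D T M := by
  exact ⟨devExt No D hdata, devNIS No D hdata, fun _ _ _ _ => rfl, fun _ _ _ _ => rfl,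
    fun _ _ => rfl, fun _ _ _ _ => rfl⟩

end Char2DoubleExt
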